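/- Let V be a finite-dimensional real vector space, let J : V → V be a linear map with J ∘ J = -id, and let L be a symmetric bilinear form on V satisfying L(J x, J y) = L(x, y) for all x, y ∈ V. If W is a subspace of V on which L is negative definite and W is maximal with this property (i.e., W is not properly contained in any subspace on which L is negative definite), then the dimension of W is even. -/

import Mathlib

/-!
Two comparisons of dimensions give the result. If every vector `L`-orthogonal to a subspace `S`
satisfies `L v v ≥ 0`, then a negative definite subspace meets the orthogonal complement of `S`
trivially, so its dimension is at most `dim S` (`finrank_le_of_orthogonal_nonneg`). The maximal
negative definite `W` has this property, since otherwise `W` could be enlarged by a line.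
So does a negative definite subspace `U` that is maximal among the `J`-invariant ones: for
`v ⊥ U` with `L v v < 0`, also `J v ⊥ U`, `L (J v) (J v) = L v v` and `L v (J v) = 0`, so
`U ⊔ span {v, J v}` would be a larger one. Hence `dim W = dim U`, and `dim U` is even because
`J` restricts to a complex structure on `U`, whose determinant squares to `(-1) ^ dim U`.
-/

/-- The bilinear form `L` is negative definite on the subspace `S`. -/
def NegDefOn {V : Type*} [AddCommGroup V] [Module ℝ V] (L : LinearMap.BilinForm ℝ V)
    (S : Submodule ℝ V) : Prop :=
  ∀ y ∈ S, y ≠ 0 → L y y < 0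

section
variable {V : Type*} [AddCommGroup V] [Module ℝ V]

lemma NegDefOn.sup {L : LinearMap.BilinForm ℝ V} (hsymm : ∀ x y, L x y = L y x)
    {S T : Submodule ℝ V} (hS : NegDefOn L S) (hT : NegDefOn L T)
    (h : ∀ t ∈ T, ∀ s ∈ S, L t s = 0) : NegDefOn L (S ⊔ T) := by
  intro y hy hy0
  obtain ⟨s, hs, t, ht, rfl⟩ := Submodule.mem_sup.1 hy
  have e : L (s + t) (s + t) = L s s + L t t := by
    simp [h t ht s hs, hsymm s t]
  rw [e]
  by_cases hs0 : s = 0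
  · subst hs0
    simpa using hT t ht (by simpa using hy0)
  · by_cases ht0 : t = 0
    · subst ht0
      simpa using hS s hs hs0
    · linarith [hS s hs hs0, hT t ht ht0]

lemma finrank_le_of_orthogonal_nonneg [FiniteDimensional ℝ V] {L : LinearMap.BilinForm ℝ V}
    {S U : Submodule ℝ V} (hS : ∀ v, (∀ s ∈ S, L v s = 0) → 0 ≤ L v v) (hU : NegDefOn L U) :
    Module.finrank ℝ U ≤ Module.finrank ℝ S := by
  -- The orthogonal complement of `S` is the kernel of `V → Dual S`, so restricting this map
  -- to `U` gives an injection of `U` into `Dual S`.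
  rw [← Subspace.dual_finrank_eq (K := ℝ) (V := S)]
  refine LinearMap.finrank_le_finrank_of_injective
    (f := S.subtype.dualMap ∘ₗ L ∘ₗ U.subtype) ?_
  rw [← LinearMap.ker_eq_bot, LinearMap.ker_eq_bot']
  rintro ⟨u, hu⟩ h
  have h0 : 0 ≤ L u u := hS u fun s hs => by
    simpa using LinearMap.congr_fun h ⟨s, hs⟩
  by_contra hne
  exact absurd (hU u hu fun h => hne (by simpa using h)) (not_lt.2 h0)

lemma even_finrank_of_invariant [FiniteDimensional ℝ V] {J : V →ₗ[ℝ] V}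
    (hJ : ∀ x, J (J x) = -x) {U : Submodule ℝ V} (hU : ∀ x ∈ U, J x ∈ U) :
    Even (Module.finrank ℝ U) := by
  have h : J.restrict hU * J.restrict hU = (-1 : ℝ) • (1 : U →ₗ[ℝ] U) := by
    ext x
    simp [hJ]
  have hd := congrArg LinearMap.det h
  rw [map_mul, LinearMap.det_smul, map_one, mul_one] at hd
  by_contra hodd
  rw [Nat.not_even_iff_odd] at hodd
  rw [hodd.neg_one_pow] at hd
  nlinarith [mul_self_nonneg (LinearMap.det (J.restrict hU))]

lemma negDefOn_span_singleton {L : LinearMap.BilinForm ℝ V} {v : V} (hv : L v v < 0) :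
    NegDefOn L (Submodule.span ℝ {v}) := by
  intro y hy hy0
  obtain ⟨a, rfl⟩ := Submodule.mem_span_singleton.1 hy
  have ha : a ≠ 0 := fun h => hy0 (by simp [h])
  have e : L (a • v) (a • v) = a * a * L v v := by simp [mul_assoc]
  rw [e]
  exact mul_neg_of_pos_of_neg (mul_self_pos.2 ha) hv

lemma exists_invariant_negDefOn [FiniteDimensional ℝ V] {J : V →ₗ[ℝ] V}
    (hJ : ∀ x, J (J x) = -x) {L : LinearMap.BilinForm ℝ V}
    (hsymm : ∀ x y, L x y = L y x) (hherm : ∀ x y, L (J x) (J y) = L x y) :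
    ∃ U : Submodule ℝ V, NegDefOn L U ∧ (∀ x ∈ U, J x ∈ U) ∧
      ∀ v, (∀ s ∈ U, L v s = 0) → 0 ≤ L v v := by
  obtain ⟨U, ⟨hU, hUJ⟩, hmax⟩ := (wellFounded_gt (α := Submodule ℝ V)).has_min
    {U | NegDefOn L U ∧ ∀ x ∈ U, J x ∈ U} ⟨⊥, by simp [NegDefOn]⟩
  refine ⟨U, hU, hUJ, fun v hv => ?_⟩
  by_contra! hneg
  have hJv : ∀ s ∈ U, L (J v) s = 0 := fun s hs => by
    have := hherm (J v) s
    rw [hJ, map_neg, LinearMap.neg_apply, hv _ (hUJ s hs)] at this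
    linarith
  have hvJ : L (J v) v = 0 := by
    have := hherm (J v) v
    rw [hJ, map_neg, LinearMap.neg_apply, hsymm v] at this
    linarith
  set T := Submodule.span ℝ {v} ⊔ Submodule.span ℝ {J v} with hTdef
  have mem_T : ∀ t ∈ T, ∃ a b : ℝ, t = a • v + b • J v := fun t ht => by
    obtain ⟨p, hp, q, hq, rfl⟩ := Submodule.mem_sup.1 ht
    obtain ⟨a, rfl⟩ := Submodule.mem_span_singleton.1 hp
    obtain ⟨b, rfl⟩ := Submodule.mem_span_singleton.1 hq
    exact ⟨a, b, rfl⟩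
  have hvT : v ∈ T := Submodule.mem_sup_left (Submodule.mem_span_singleton_self v)
  have hJvT : J v ∈ T := Submodule.mem_sup_right (Submodule.mem_span_singleton_self _)
  have hT : NegDefOn L T := by
    refine (negDefOn_span_singleton hneg).sup hsymm
      (negDefOn_span_singleton (by rwa [hherm])) fun t ht s hs => ?_
    obtain ⟨a, rfl⟩ := Submodule.mem_span_singleton.1 ht
    obtain ⟨b, rfl⟩ := Submodule.mem_span_singleton.1 hs
    simp [hvJ]
  have hUT : NegDefOn L (U ⊔ T) := hU.sup hsymm hT fun t ht s hs => by
    obtain ⟨a, b, rfl⟩ := mem_T t ht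
    simp [hv s hs, hJv s hs]
  refine hmax (U ⊔ T) ⟨hUT, fun x hx => ?_⟩ ?_
  · obtain ⟨s, hs, t, ht, rfl⟩ := Submodule.mem_sup.1 hx
    obtain ⟨a, b, rfl⟩ := mem_T t ht
    rw [map_add]
    refine Submodule.add_mem_sup (hUJ s hs) ?_
    rw [map_add, map_smul, map_smul, hJ]
    exact T.add_mem (T.smul_mem _ hJvT) (T.smul_mem _ (T.neg_mem hvT))
  · refine lt_of_le_of_ne le_sup_left fun h => ?_
    have hvU : v ∈ U := h ▸ Submodule.mem_sup_right hvT
    exact hneg.ne (hv v hvU)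

end


/-- For a `J`-Hermitian symmetric bilinear form `L` on a finite-dimensional real
vector space, every maximal subspace on which `L` is negative definite has even
dimension. -/
theorem hermitian_form_maximal_negative_subspace_even_dim
    (V : Type*) [AddCommGroup V] [Module ℝ V] [FiniteDimensional ℝ V]
    (J : V →ₗ[ℝ] V) (hJ : ∀ x, J (J x) = -x)
    (L : LinearMap.BilinForm ℝ V)
    (hsymm : ∀ x y, L x y = L y x)
    (hherm : ∀ x y, L (J x) (J y) = L x y)
    (W : Submodule ℝ V)
    (hneg : ∀ y ∈ W, y ≠ 0 → L y y < 0)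
    (hmax : ∀ W' : Submodule ℝ V, (∀ y ∈ W', y ≠ 0 → L y y < 0) → W ≤ W' → W' = W) :
    Even (Module.finrank ℝ W) := by
  have hW : ∀ v, (∀ s ∈ W, L v s = 0) → 0 ≤ L v v := fun v hv => by
    by_contra! hvneg
    have hsup : NegDefOn L (W ⊔ Submodule.span ℝ {v}) :=
      NegDefOn.sup hsymm hneg (negDefOn_span_singleton hvneg) fun t ht s hs => by
        obtain ⟨a, rfl⟩ := Submodule.mem_span_singleton.1 ht
        simp [hv s hs]
    have hvW : v ∈ W := hmax _ hsup le_sup_left ▸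
      Submodule.mem_sup_right (Submodule.mem_span_singleton_self v)
    exact hvneg.ne (hv v hvW)
  obtain ⟨U, hU, hUJ, hUorth⟩ := exists_invariant_negDefOn hJ hsymm hherm
  rw [le_antisymm (finrank_le_of_orthogonal_nonneg hUorth hneg)
    (finrank_le_of_orthogonal_nonneg hW hU)]
  exact even_finrank_of_invariant hJ hUJ
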